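/- With the determinant-exponent setup below, let p be a prime with p > α! (α factorial), let F be a field of characteristic p, and let N := max_σ pow(σ), the maximum of pow over all permutations σ of Fin α. Let g be a nonzero element of F such that for every nonzero polynomial f over ZMod p with natural degree at most N, the evaluation of f at g (via the canonical ring map ZMod p → F) is nonzero (i.e. g satisfies no nontrivial algebraic relation of degree ≤ N over the prime field). Define the α×α matrix Ξ over F by Ξ(r, c) := g^{⌊c/w⌋ · i(⌊r/s⌋) + r · h(c mod w)} for 0 ≤ r, c < α. Then the determinant of Ξ is nonzero, i.e. Ξ is invertible. -/

import Mathlib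

/-!
The Leibniz expansion exhibits `det Ξ` as the value at `g` of
`P = Σ_σ sign(σ) X^{pow(σ)}` over `ZMod p`, a polynomial of degree at most `N`. It suffices that
`P ≠ 0`, and this holds because `pow` has a *unique* maximizer, so that the coefficient of `X^N`
in `P` is `±1`.

Uniqueness is an exchange argument. Let `σ` be a maximizer and `r₁ < r₂`; swapping the two values
`σ r₁`, `σ r₂` cannot increase `pow`.
* If `r₁`, `r₂` lie in different row blocks of size `s`, the gap `> α·n` between the exponents `i`
  outweighs any change in the terms `r·h(·)`, which forces `σ r₁ < σ r₂`
  (`lt_of_maximizer_of_block_lt`). By counting, `σ` then preserves the blocks of size `s`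
  (`div_eq_of_block_lt`).
* If they lie in the same block, then `σ r₁ mod w < σ r₂ mod w` (`mod_lt_of_maximizer`); residues
  mod `w` are distinct within a block since `s ≤ w`.

Hence `r ↦ (⌊σ(r)/s⌋, σ(r) mod w)` is strictly increasing for the lexicographic order. As
`c ↦ (⌊c/s⌋, c mod w)` is injective, this determines `σ`.
-/

/-- `pow σ = Σ_{r} ( ⌊σ(r)/w⌋ · i(⌊r/s⌋) + r · h(σ(r) mod w) )`, the exponent of the
primitive element `g` in the Leibniz-expansion term of `det Ξ` associated with the
permutation `σ` of `Fin α`. -/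
def powPerm (α s w z : ℕ) (hw : 0 < w) (hsα : s ∣ α) (hz : z = α / s)
    (h : Fin w → ℕ) (i : Fin z → ℕ) (σ : Equiv.Perm (Fin α)) : ℕ :=
  ∑ r : Fin α,
    ((σ r : ℕ) / w *
        i ⟨(r : ℕ) / s, by rw [hz]; exact Nat.div_lt_div_of_lt_of_dvd hsα r.isLt⟩
      + (r : ℕ) * h ⟨(σ r : ℕ) % w, Nat.mod_lt _ hw⟩)

/-- `σ` is block-preserving if it maps each block row of size `s` to the block column
of size `s` with the same index: `⌊σ(r)/s⌋ = ⌊r/s⌋` for all `r`. -/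
def IsBlockPreserving (α s : ℕ) (σ : Equiv.Perm (Fin α)) : Prop :=
  ∀ r : Fin α, (σ r : ℕ) / s = (r : ℕ) / s

/-- The matrix `Ξ` with entries `Ξ(r,c) = g^{⌊c/w⌋·i(⌊r/s⌋) + r·h(c mod w)}`. -/
def xiMat {F : Type*} [Field F] (α s w z : ℕ) (hw : 0 < w) (hsα : s ∣ α)
    (hz : z = α / s) (h : Fin w → ℕ) (i : Fin z → ℕ) (g : F) :
    Matrix (Fin α) (Fin α) F :=
  Matrix.of fun r c : Fin α =>
    g ^ ((c : ℕ) / w *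
          i ⟨(r : ℕ) / s, by rw [hz]; exact Nat.div_lt_div_of_lt_of_dvd hsα r.isLt⟩
        + (r : ℕ) * h ⟨(c : ℕ) % w, Nat.mod_lt _ hw⟩)

/-- The exchange inequality: at a maximizer of an assignment sum, swapping two values does not
increase the sum. -/
lemma swap_le_of_maximizer {ι : Type*} [Fintype ι] [DecidableEq ι] (f : ι → ι → ℕ)
    (σ : Equiv.Perm ι) (hσ : ∀ τ : Equiv.Perm ι, ∑ r, f r (τ r) ≤ ∑ r, f r (σ r))
    {a b : ι} (hab : a ≠ b) :
    f a (σ b) + f b (σ a) ≤ f a (σ a) + f b (σ b) := by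
  have h1 := hσ (σ * Equiv.swap a b)
  rw [← Finset.sum_add_sum_compl {a, b}, ← Finset.sum_add_sum_compl {a, b} (fun r => f r (σ r)),
    Finset.sum_pair hab, Finset.sum_pair hab] at h1
  have h2 : ∑ r ∈ ({a, b} : Finset ι)ᶜ, f r ((σ * Equiv.swap a b) r) =
      ∑ r ∈ ({a, b} : Finset ι)ᶜ, f r (σ r) := by
    refine Finset.sum_congr rfl fun r hr => ?_
    simp only [Finset.mem_compl, Finset.mem_insert, Finset.mem_singleton, not_or] at hr
    rw [Equiv.Perm.mul_apply, Equiv.swap_apply_of_ne_of_ne hr.1 hr.2]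
  rw [h2] at h1
  simp only [Equiv.Perm.mul_apply, Equiv.swap_apply_left, Equiv.swap_apply_right] at h1
  omega

/-- A permutation that is increasing across blocks of size `s` preserves these blocks: `σ r` exceeds
the images of all rows in earlier blocks, so `⌊r/s⌋ ≤ ⌊σ(r)/s⌋`, and both sides have the same sum
over `r`. -/
lemma div_eq_of_block_lt {α s : ℕ} (hs : 0 < s) (σ : Equiv.Perm (Fin α))
    (hσ : ∀ r₁ r₂ : Fin α, (r₁ : ℕ) / s < (r₂ : ℕ) / s → σ r₁ < σ r₂) (r : Fin α) :
    (σ r : ℕ) / s = (r : ℕ) / s := by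
  have hle : ∀ r : Fin α, (r : ℕ) / s ≤ (σ r : ℕ) / s := by
    intro r
    rw [Nat.le_div_iff_mul_le hs]
    have hr : (r : ℕ) / s * s ≤ r := Nat.div_mul_le_self _ _
    have hlt : ∀ x : Fin ((r : ℕ) / s * s), (x : ℕ) < α := fun x => by omega
    have hcard := Finset.card_le_card_of_injOn (s := Finset.univ) (t := Finset.Iio (σ r))
      (fun x : Fin ((r : ℕ) / s * s) => σ ⟨x, hlt x⟩)
      (fun x _ => by
        simp only [Finset.coe_Iio, Set.mem_Iio]
        exact hσ _ _ ((Nat.div_lt_iff_lt_mul hs).2 x.isLt))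
      (fun x _ y _ hxy => by
        have := σ.injective hxy
        simpa [Fin.ext_iff] using this)
    simpa using hcard
  have hsum : ∑ r : Fin α, (r : ℕ) / s = ∑ r : Fin α, (σ r : ℕ) / s :=
    (Equiv.sum_comp σ fun r : Fin α => (r : ℕ) / s).symm
  exact ((Finset.sum_eq_sum_iff_of_le fun r _ => hle r).1 hsum r (Finset.mem_univ r)).symm

section Maximizer

variable {α s w n : ℕ} {I H : Fin α → ℕ} {σ : Equiv.Perm (Fin α)}

/-- A maximizer is increasing across row blocks: the quotients `⌊σ(r)/w⌋` cannot decrease because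
of the large gaps in `I`, and where they agree the values of `H` must increase. -/
lemma lt_of_maximizer_of_block_lt
    (hI : ∀ r₁ r₂ : Fin α, (r₁ : ℕ) / s < (r₂ : ℕ) / s → I r₁ + α * n < I r₂)
    (hHn : ∀ c, H c ≤ n)
    (hH : ∀ c₁ c₂ : Fin α, (c₁ : ℕ) % w < (c₂ : ℕ) % w → H c₁ < H c₂)
    (hσ : ∀ τ : Equiv.Perm (Fin α), ∑ r : Fin α, ((τ r : ℕ) / w * I r + (r : ℕ) * H (τ r)) ≤
      ∑ r : Fin α, ((σ r : ℕ) / w * I r + (r : ℕ) * H (σ r)))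
    (r₁ r₂ : Fin α) (hr : (r₁ : ℕ) / s < (r₂ : ℕ) / s) : σ r₁ < σ r₂ := by
  have hlt : (r₁ : ℕ) < r₂ := by
    by_contra hc
    exact absurd (Nat.div_le_div_right (c := s) (not_lt.1 hc)) (not_le.2 hr)
  have hne : r₁ ≠ r₂ := fun e => by simp [e] at hlt
  have hsw := swap_le_of_maximizer (fun r c : Fin α => (c : ℕ) / w * I r + (r : ℕ) * H c) σ hσ hne
  have hI' := hI r₁ r₂ hr
  have hb : (r₂ : ℕ) * H (σ r₂) ≤ α * n := Nat.mul_le_mul r₂.isLt.le (hHn _)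
  have hq : (σ r₁ : ℕ) / w ≤ (σ r₂ : ℕ) / w := by
    by_contra hc
    obtain ⟨k, hk⟩ := Nat.exists_eq_add_of_lt (not_le.1 hc)
    obtain ⟨j, hj⟩ := Nat.exists_eq_add_of_lt hI'
    have hm : (r₁ : ℕ) * H (σ r₁) ≤ r₂ * H (σ r₁) := Nat.mul_le_mul_right _ hlt.le
    rw [hk, hj] at hsw
    have hpos : 0 ≤ k * (α * n + j + 1) := Nat.zero_le _
    nlinarith
  by_contra hc
  have hc' : (σ r₂ : ℕ) ≤ σ r₁ := not_lt.1 hc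
  have hq' : (σ r₁ : ℕ) / w = (σ r₂ : ℕ) / w := le_antisymm hq (Nat.div_le_div_right hc')
  have hv : (σ r₁ : ℕ) ≠ σ r₂ := fun e => hne (σ.injective (Fin.ext e))
  have e1 := Nat.div_add_mod (σ r₁ : ℕ) w
  have e2 := Nat.div_add_mod (σ r₂ : ℕ) w
  rw [hq'] at e1
  have hh := hH (σ r₂) (σ r₁) (by omega)
  rw [hq'] at hsw
  nlinarith

/-- Within a row block, a maximizer lists its values by increasing residue mod `w`. -/
lemma mod_lt_of_maximizer
    (hI : ∀ r₁ r₂ : Fin α, (r₁ : ℕ) / s = (r₂ : ℕ) / s → I r₁ = I r₂)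
    (hH : ∀ c₁ c₂ : Fin α, (c₁ : ℕ) % w < (c₂ : ℕ) % w → H c₁ < H c₂)
    (hσ : ∀ τ : Equiv.Perm (Fin α), ∑ r : Fin α, ((τ r : ℕ) / w * I r + (r : ℕ) * H (τ r)) ≤
      ∑ r : Fin α, ((σ r : ℕ) / w * I r + (r : ℕ) * H (σ r)))
    (r₁ r₂ : Fin α) (hlt : r₁ < r₂) (hr : (r₁ : ℕ) / s = (r₂ : ℕ) / s)
    (hne : (σ r₁ : ℕ) % w ≠ (σ r₂ : ℕ) % w) : (σ r₁ : ℕ) % w < (σ r₂ : ℕ) % w := by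
  by_contra hc
  have hsw := swap_le_of_maximizer (fun r c : Fin α => (c : ℕ) / w * I r + (r : ℕ) * H c) σ hσ
    hlt.ne
  simp only [hI r₁ r₂ hr] at hsw
  have hh := hH (σ r₂) (σ r₁) (by omega)
  have hlt' : (r₁ : ℕ) < r₂ := hlt
  nlinarith

end Maximizer

/-- Since `s ≤ w`, a number is determined by its block of size `s` and its residue mod `w`. -/
lemma eq_of_div_eq_of_mod_eq {s w a b : ℕ} (hs : 0 < s) (hsw : s ≤ w) (hd : a / s = b / s)
    (hm : a % w = b % w) : a = b := by
  wlog hab : a ≤ b generalizing a b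
  · exact (this hd.symm hm.symm (by omega)).symm
  have hdvd : w ∣ b - a := (Nat.modEq_iff_dvd' hab).1 hm
  have ea := Nat.div_add_mod a s
  have eb := Nat.div_add_mod b s
  have la := Nat.mod_lt a hs
  have lb := Nat.mod_lt b hs
  rw [hd] at ea
  have := Nat.eq_zero_of_dvd_of_lt hdvd (by omega)
  omega

/-- The exponent sum has at most one maximizer. -/
lemma maximizer_unique {α s w n : ℕ} {I H : Fin α → ℕ} (hs : 0 < s) (hsw : s ≤ w)
    (hI : ∀ r₁ r₂ : Fin α, (r₁ : ℕ) / s < (r₂ : ℕ) / s → I r₁ + α * n < I r₂)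
    (hI' : ∀ r₁ r₂ : Fin α, (r₁ : ℕ) / s = (r₂ : ℕ) / s → I r₁ = I r₂)
    (hHn : ∀ c, H c ≤ n)
    (hH : ∀ c₁ c₂ : Fin α, (c₁ : ℕ) % w < (c₂ : ℕ) % w → H c₁ < H c₂)
    {σ τ : Equiv.Perm (Fin α)}
    (hσ : ∀ ρ : Equiv.Perm (Fin α), ∑ r : Fin α, ((ρ r : ℕ) / w * I r + (r : ℕ) * H (ρ r)) ≤
      ∑ r : Fin α, ((σ r : ℕ) / w * I r + (r : ℕ) * H (σ r)))
    (hτ : ∀ ρ : Equiv.Perm (Fin α), ∑ r : Fin α, ((ρ r : ℕ) / w * I r + (r : ℕ) * H (ρ r)) ≤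
      ∑ r : Fin α, ((τ r : ℕ) / w * I r + (r : ℕ) * H (τ r))) : σ = τ := by
  let key : Fin α → ℕ ×ₗ ℕ := fun c => toLex ((c : ℕ) / s, (c : ℕ) % w)
  have hkey : Function.Injective key := fun a b hab => by
    have hab' := Prod.ext_iff.1 (toLex.injective hab)
    exact Fin.ext (eq_of_div_eq_of_mod_eq hs hsw hab'.1 hab'.2)
  have hmono : ∀ ρ : Equiv.Perm (Fin α),
      (∀ π : Equiv.Perm (Fin α), ∑ r : Fin α, ((π r : ℕ) / w * I r + (r : ℕ) * H (π r)) ≤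
        ∑ r : Fin α, ((ρ r : ℕ) / w * I r + (r : ℕ) * H (ρ r))) → StrictMono (key ∘ ρ) := by
    intro ρ hρ r₁ r₂ hlt
    have hb := div_eq_of_block_lt hs ρ (lt_of_maximizer_of_block_lt hI hHn hH hρ)
    rw [Function.comp_apply, Function.comp_apply, Prod.Lex.toLex_lt_toLex]
    simp only [hb]
    rcases (Nat.div_le_div_right (c := s) (show (r₁ : ℕ) ≤ r₂ from hlt.le)).lt_or_eq with hr | hr
    · exact Or.inl hr
    · refine Or.inr ⟨hr, mod_lt_of_maximizer hI' hH hρ r₁ r₂ hlt hr fun e => hlt.ne ?_⟩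
      exact ρ.injective (Fin.ext (eq_of_div_eq_of_mod_eq hs hsw (by rw [hb, hb, hr]) e))
  have hrange : Set.range (key ∘ σ) = Set.range (key ∘ τ) := by
    rw [EquivLike.range_comp, EquivLike.range_comp]
  have heq := ((hmono σ hσ).range_inj (hmono τ hτ)).1 hrange
  exact Equiv.ext fun r => hkey (congrFun heq r)

/-- non-singularity of the repair decoding matrix. Over a field `F` of
prime characteristic `p > α!`, if the nonzero element `g` satisfies no nontrivial
algebraic relation over the prime field of degree at most `N := max_σ pow(σ)`, then
the matrix `Ξ` with entries `g^{⌊c/w⌋·i(⌊r/s⌋) + r·h(c mod w)}` has nonzero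
determinant, i.e. is invertible. -/
theorem xiMat_det_ne_zero
    (n b dmin d α s w z : ℕ)
    (hb : 0 < b) (h2b : 2 * b < dmin) (hdmind : dmin ≤ d) (hdn : d ≤ n) (hα : 0 < α)
    (hs : s = dmin - 2 * b) (hw : w = d - 2 * b)
    (hsα : s ∣ α) (hwα : w ∣ α) (hz : z = α / s)
    (h : Fin w → ℕ) (hmono : StrictMono h) (hrange : ∀ ℓ, 1 ≤ h ℓ ∧ h ℓ ≤ n)
    (i : Fin z → ℕ) (himono : StrictMono i)
    (higap : ∀ ℓ₁ ℓ₂ : Fin z, ℓ₁ < ℓ₂ → α * n < i ℓ₂ - i ℓ₁)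
    (p : ℕ) (hp : p.Prime) (hpfac : Nat.factorial α < p)
    (F : Type*) [Field F] [CharP F p]
    (N : ℕ)
    (hN : N = Finset.univ.sup fun σ : Equiv.Perm (Fin α) =>
      powPerm α s w z (by omega) hsα hz h i σ)
    (g : F) (hg : g ≠ 0)
    (halg : ∀ f : Polynomial (ZMod p), f ≠ 0 → f.natDegree ≤ N →
      Polynomial.eval₂ (ZMod.castHom (dvd_refl p) F) g f ≠ 0) :
    (xiMat α s w z (by omega) hsα hz h i g).det ≠ 0 := by
  have hs0 : 0 < s := by omega
  have hsw : s ≤ w := by omega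
  have hw0 : 0 < w := by omega
  have : Fact p.Prime := ⟨hp⟩
  obtain ⟨σ, -, hσ⟩ := Finset.exists_max_image Finset.univ
    (fun σ : Equiv.Perm (Fin α) => powPerm α s w z hw0 hsα hz h i σ) Finset.univ_nonempty
  have hle : ∀ τ, powPerm α s w z hw0 hsα hz h i τ ≤ N := fun τ =>
    hN ▸ Finset.le_sup (f := fun σ : Equiv.Perm (Fin α) => powPerm α s w z hw0 hsα hz h i σ)
      (Finset.mem_univ τ)
  have hσN : powPerm α s w z hw0 hsα hz h i σ = N :=
    le_antisymm (hle σ) (hN ▸ Finset.sup_le fun τ hτ => hσ τ hτ)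
  have huniq : ∀ τ, powPerm α s w z hw0 hsα hz h i τ = N → τ = σ := by
    intro τ hτ
    refine maximizer_unique (n := n)
      (I := fun r : Fin α =>
        i ⟨(r : ℕ) / s, by rw [hz]; exact Nat.div_lt_div_of_lt_of_dvd hsα r.isLt⟩)
      (H := fun c : Fin α => h ⟨(c : ℕ) % w, Nat.mod_lt _ hw0⟩) hs0 hsw ?_ ?_ ?_ ?_ ?_ ?_
    · intro r₁ r₂ hr
      have := higap
        ⟨(r₁ : ℕ) / s, by rw [hz]; exact Nat.div_lt_div_of_lt_of_dvd hsα r₁.isLt⟩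
        ⟨(r₂ : ℕ) / s, by rw [hz]; exact Nat.div_lt_div_of_lt_of_dvd hsα r₂.isLt⟩ hr
      omega
    · intro r₁ r₂ hr
      simp only [hr]
    · exact fun c => (hrange _).2
    · exact fun c₁ c₂ hc => hmono hc
    · exact fun ρ => (hle ρ).trans hτ.ge
    · exact fun ρ => (hle ρ).trans hσN.ge
  -- The Leibniz expansion of `det Ξ`, with `g` replaced by an indeterminate.
  let P : Polynomial (ZMod p) := ∑ τ : Equiv.Perm (Fin α),
    Polynomial.monomial (powPerm α s w z hw0 hsα hz h i τ) (((Equiv.Perm.sign τ : ℤ)) : ZMod p)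
  have hcoeff : P.coeff N = ((Equiv.Perm.sign σ : ℤ) : ZMod p) := by
    simp only [P, Polynomial.finsetSum_coeff, Polynomial.coeff_monomial]
    rw [Finset.sum_eq_single σ (fun τ _ hne => if_neg fun e => hne (huniq τ e)) (by simp),
      if_pos hσN]
  have hP : P ≠ 0 := by
    intro h0
    rw [h0, Polynomial.coeff_zero] at hcoeff
    rcases Int.units_eq_one_or (Equiv.Perm.sign σ) with e | e <;> simp [e] at hcoeff
  have hdeg : P.natDegree ≤ N := Polynomial.natDegree_sum_le_of_forall_le _ _ fun τ _ =>
    (Polynomial.natDegree_monomial_le _).trans (hle τ)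
  have heval : Polynomial.eval₂ (ZMod.castHom (dvd_refl p) F) g P =
      (xiMat α s w z hw0 hsα hz h i g).det := by
    rw [← Matrix.det_transpose, Matrix.det_apply']
    simp only [P, Polynomial.eval₂_finsetSum, Polynomial.eval₂_monomial, map_intCast]
    refine Finset.sum_congr rfl fun τ _ => ?_
    simp only [xiMat, powPerm, Matrix.transpose_apply, Matrix.of_apply, Finset.prod_pow_eq_pow_sum]
  exact heval ▸ halg P hP hdeg
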